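/- Let 𝕊 be a locally convex subsymmetric sequence space and σ=(σ_n) an ordered partition of ℕ with N_n=|σ_n|. Then: (i) ‖P_σ(S_A(f))‖_𝕊 ≤ 4‖f‖_𝕊 for every A⊆ℕ and every f ∈ Q_σ(𝕊); (ii) if 𝕊 satisfies an upper s-estimate for some s≥1, there is a constant C such that for all A⊆ℕ and f∈𝕊, ‖Q_σ(S_A(f))‖_𝕊 ≤ 5‖Q_σ(f)‖_𝕊 + C(Σ_{n=1}^∞ (Λ_{m_n}/Λ_{N_n})^s |v_n*(f)|^s)^{1/s}, where m_n = |A∩σ_n| and Λ_m = Λ_m[𝕊]. -/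

import Mathlib

noncomputable section

open Classical
open scoped ENNReal NNReal

namespace AGpaper

/-! ### Convergence and completeness with respect to a gauge -/

/-- Convergence of a sequence with respect to a gauge (quasi-norm) `q`. -/
def QTendsto {X : Type*} [AddCommGroup X] (q : X → ℝ) (u : ℕ → X) (x : X) : Prop :=
  ∀ ε : ℝ, 0 < ε → ∃ n₀ : ℕ, ∀ n, n₀ ≤ n → q (u n - x) < ε

/-- Cauchy condition with respect to a gauge `q`. -/
def QCauchy {X : Type*} [AddCommGroup X] (q : X → ℝ) (u : ℕ → X) : Prop :=
  ∀ ε : ℝ, 0 < ε → ∃ n₀ : ℕ, ∀ m, n₀ ≤ m → ∀ n, n₀ ≤ n → q (u m - u n) < ε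

/-- A quasi-Banach space structure on a real vector space `X`. -/
structure QuasiBanach (X : Type*) [AddCommGroup X] [Module ℝ X] where
  q : X → ℝ
  kappa : ℝ
  one_le_kappa : 1 ≤ kappa
  q_nonneg : ∀ x, 0 ≤ q x
  q_eq_zero_iff : ∀ x, q x = 0 ↔ x = 0
  q_smul : ∀ (a : ℝ) (x : X), q (a • x) = |a| * q x
  q_triangle : ∀ x y, q (x + y) ≤ kappa * (q x + q y)
  complete : ∀ u : ℕ → X, QCauchy q u → ∃ x, QTendsto q u x

/-- `X` is `p`-convex (0<p≤1): after renorming the quasi-norm is a `p`-norm. -/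
def QuasiBanach.PConvex {X : Type*} [AddCommGroup X] [Module ℝ X]
    (B : QuasiBanach X) (p : ℝ) : Prop :=
  ∃ q' : X → ℝ, (∀ x, 0 ≤ q' x) ∧ (∀ (a : ℝ) (x : X), q' (a • x) = |a| * q' x) ∧
    (∀ x y, q' (x + y) ^ p ≤ q' x ^ p + q' y ^ p) ∧
    ∃ c C : ℝ, 0 < c ∧ ∀ x, c * B.q x ≤ q' x ∧ q' x ≤ C * B.q x

/-! ### Biorthogonal systems and Schauder bases -/

variable {X : Type*} [AddCommGroup X] [Module ℝ X]

/-- A biorthogonal system in a space of vectors `X` which is equipped with a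
membership predicate `mem` (the carrier of the space) and a gauge `nrm`:
the coordinate functionals are linear and bounded on the carrier. -/
structure BioSystem (mem : X → Prop) (nrm : X → ℝ) where
  vec : ℕ → X
  vec_mem : ∀ n, mem (vec n)
  coord : ℕ → X → ℝ
  coord_add : ∀ (n : ℕ) (f g : X), mem f → mem g → coord n (f + g) = coord n f + coord n g
  coord_smul : ∀ (n : ℕ) (a : ℝ) (f : X), mem f → coord n (a • f) = a * coord n f
  coord_bdd : ∀ n : ℕ, ∃ C : ℝ, ∀ f, mem f → |coord n f| ≤ C * nrm f
  biorth : ∀ m n, coord m (vec n) = if m = n then (1 : ℝ) else 0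

/-- A Schauder basis: a biorthogonal system whose expansions converge. -/
structure SchauderB (mem : X → Prop) (nrm : X → ℝ) extends BioSystem mem nrm where
  expansion : ∀ f, mem f →
    QTendsto nrm (fun m => ∑ n ∈ Finset.range m, coord n f • vec n) f

/-- A Schauder basis of a quasi-Banach space. -/
abbrev QBasis {X : Type*} [AddCommGroup X] [Module ℝ X] (B : QuasiBanach X) :=
  SchauderB (fun _ : X => True) B.q

variable {mem : X → Prop} {nrm : X → ℝ}

/-- Coordinate projection on a finite set `A`. -/
def BioSystem.proj (b : BioSystem mem nrm) (A : Finset ℕ) (f : X) : X :=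
  ∑ n ∈ A, b.coord n f • b.vec n

def BioSystem.SemiNormalized (b : BioSystem mem nrm) : Prop :=
  ∃ c C : ℝ, 0 < c ∧ ∀ n, c ≤ nrm (b.vec n) ∧ nrm (b.vec n) ≤ C

/-- `A` is a greedy set of `f`. -/
def BioSystem.GreedySet (b : BioSystem mem nrm) (f : X) (A : Finset ℕ) : Prop :=
  ∀ j ∈ A, ∀ k, k ∉ A → |b.coord k f| ≤ |b.coord j f|

def BioSystem.QuasiGreedy (b : BioSystem mem nrm) : Prop :=
  ∃ C : ℝ, ∀ f, mem f → ∀ A : Finset ℕ, b.GreedySet f A → nrm (b.proj A f) ≤ C * nrm f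

def BioSystem.Democratic (b : BioSystem mem nrm) : Prop :=
  ∃ C : ℝ, ∀ A B : Finset ℕ, A.card ≤ B.card →
    nrm (∑ n ∈ A, b.vec n) ≤ C * nrm (∑ n ∈ B, b.vec n)

def BioSystem.AlmostGreedy (b : BioSystem mem nrm) : Prop :=
  b.QuasiGreedy ∧ b.Democratic

/-- Asymptotic suppression unconditionality: coordinate projections `S_A` with
`|A| < min A` are uniformly bounded. -/
def BioSystem.ASU (b : BioSystem mem nrm) : Prop :=
  ∃ D : ℝ, ∀ A : Finset ℕ, (∀ n ∈ A, A.card < n) →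
    ∀ f, mem f → nrm (b.proj A f) ≤ D * nrm f

/-- The fundamental function (upper super-democracy function). -/
def BioSystem.fundFun (b : BioSystem mem nrm) (m : ℕ) : ℝ :=
  sSup {t : ℝ | ∃ (A : Finset ℕ) (ε : ℕ → ℝ), A.card ≤ m ∧ (∀ n ∈ A, |ε n| = 1) ∧
    t = nrm (∑ n ∈ A, ε n • b.vec n)}

/-- The unconditionality parameters `k_m`. -/
def BioSystem.kparam (b : BioSystem mem nrm) (m : ℕ) : ℝ :=
  sSup {t : ℝ | ∃ (A : Finset ℕ) (f : X), A.card ≤ m ∧ mem f ∧ nrm f ≤ 1 ∧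
    t = nrm (b.proj A f)}

/-- The unconditionality parameters `k̃_m` (restricted to the span of the first
`m` basis vectors). -/
def BioSystem.ktilde (b : BioSystem mem nrm) (m : ℕ) : ℝ :=
  sSup {t : ℝ | ∃ (A : Finset ℕ) (a : ℕ → ℝ),
    nrm (∑ n ∈ Finset.range m, a n • b.vec n) ≤ 1 ∧
    t = nrm (b.proj A (∑ n ∈ Finset.range m, a n • b.vec n))}

/-! ### Symmetric and subsymmetric sequence spaces -/

/-- The indicator of `{0, 1, ..., m-1}`. -/
def indic (m : ℕ) : ℕ → ℝ := fun j => if j < m then 1 else 0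

/-- The `n`-th unit vector. -/
def unitVec (n : ℕ) : ℕ → ℝ := fun j => if j = n then 1 else 0

/-- The spreading `Σ_n ε_n f_n e_{φ(n)}` of a sequence `f`. -/
def spread (φ : ℕ → ℕ) (ε : ℕ → ℝ) (f : ℕ → ℝ) : ℕ → ℝ :=
  fun j => if h : ∃ n, φ n = j then ε h.choose * f h.choose else 0

/-- A symmetric sequence space: a quasi-Banach sequence space whose quasi-norm is
invariant under permutations and signs. -/
structure SymmetricSpace where
  mem : (ℕ → ℝ) → Prop
  nrm : (ℕ → ℝ) → ℝ
  kappa : ℝ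
  one_le_kappa : 1 ≤ kappa
  zero_mem : mem 0
  add_mem : ∀ {f g}, mem f → mem g → mem (f + g)
  smul_mem : ∀ (a : ℝ) {f}, mem f → mem (a • f)
  nrm_nonneg : ∀ f, 0 ≤ nrm f
  nrm_eq_zero : ∀ {f}, mem f → (nrm f = 0 ↔ f = 0)
  nrm_smul : ∀ (a : ℝ) (f : ℕ → ℝ), nrm (a • f) = |a| * nrm f
  nrm_triangle : ∀ {f g}, mem f → mem g → nrm (f + g) ≤ kappa * (nrm f + nrm g)
  complete : ∀ u : ℕ → (ℕ → ℝ), (∀ n, mem (u n)) → QCauchy nrm u →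
    ∃ f, mem f ∧ QTendsto nrm u f
  symmetric : ∀ {f}, mem f → ∀ (ε : ℕ → ℝ), (∀ n, |ε n| = 1) → ∀ π : Equiv.Perm ℕ,
    mem (fun j => ε j * f (π j)) ∧ nrm (fun j => ε j * f (π j)) = nrm f

/-- Fundamental function of a symmetric sequence space. -/
def SymmetricSpace.Lam (S : SymmetricSpace) (m : ℕ) : ℝ := S.nrm (indic m)

/-- A (locally convex, i.e. Banach) subsymmetric sequence space. -/
structure SubsymmetricSpace where
  mem : (ℕ → ℝ) → Prop
  nrm : (ℕ → ℝ) → ℝ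
  zero_mem : mem 0
  add_mem : ∀ {f g}, mem f → mem g → mem (f + g)
  smul_mem : ∀ (a : ℝ) {f}, mem f → mem (a • f)
  nrm_nonneg : ∀ f, 0 ≤ nrm f
  nrm_eq_zero : ∀ {f}, mem f → (nrm f = 0 ↔ f = 0)
  nrm_smul : ∀ (a : ℝ) (f : ℕ → ℝ), nrm (a • f) = |a| * nrm f
  nrm_triangle : ∀ {f g}, mem f → mem g → nrm (f + g) ≤ nrm f + nrm g
  complete : ∀ u : ℕ → (ℕ → ℝ), (∀ n, mem (u n)) → QCauchy nrm u →
    ∃ f, mem f ∧ QTendsto nrm u f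
  unit_mem : ∀ n, mem (unitVec n)
  unit_basis : ∀ f, mem f →
    QTendsto nrm (fun m => fun j => if j < m then f j else 0) f
  subsym : ∀ {f}, mem f → ∀ (ε : ℕ → ℝ), (∀ n, |ε n| = 1) → ∀ φ : ℕ → ℕ, StrictMono φ →
    mem (spread φ ε f) ∧ nrm (spread φ ε f) = nrm f

/-- Fundamental function of (the unit vector system of) a subsymmetric sequence space. -/
def SubsymmetricSpace.Lam (S : SubsymmetricSpace) (m : ℕ) : ℝ := S.nrm (indic m)

/-- The dual fundamental function `Λ*_m = m / Λ_m`. -/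
def SubsymmetricSpace.LamStar (S : SubsymmetricSpace) (m : ℕ) : ℝ := (m : ℝ) / S.Lam m

/-- Lower regularity property of a sequence of positive reals (indexed by `m ≥ 1`). -/
def LRP (Γ : ℕ → ℝ) : Prop := ∃ b : ℕ, 0 < b ∧ ∀ m : ℕ, 1 ≤ m → 2 * Γ m ≤ Γ (b * m)

/-- Upper regularity property. -/
def URP (Γ : ℕ → ℝ) : Prop := ∃ b : ℕ, 0 < b ∧ ∀ m : ℕ, 1 ≤ m → 2 * Γ (b * m) ≤ (b : ℝ) * Γ m

/-- Superreflexivity of a subsymmetric sequence space: it admits an equivalent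
uniformly convex norm. -/
def SubsymmetricSpace.Superreflexive (S : SubsymmetricSpace) : Prop :=
  ∃ nrm' : (ℕ → ℝ) → ℝ,
    (∀ f, S.mem f → 0 ≤ nrm' f) ∧
    (∀ (a : ℝ) (f), S.mem f → nrm' (a • f) = |a| * nrm' f) ∧
    (∀ f g, S.mem f → S.mem g → nrm' (f + g) ≤ nrm' f + nrm' g) ∧
    (∃ c C : ℝ, 0 < c ∧ ∀ f, S.mem f → c * S.nrm f ≤ nrm' f ∧ nrm' f ≤ C * S.nrm f) ∧
    (∀ ε : ℝ, 0 < ε → ∃ δ : ℝ, 0 < δ ∧ ∀ f g, S.mem f → S.mem g →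
      nrm' f ≤ 1 → nrm' g ≤ 1 → ε ≤ nrm' (f - g) → nrm' (f + g) ≤ 2 * (1 - δ))

/-! ### Upper and lower estimates -/

/-- A finite family with pairwise disjoint supports. -/
def DisjFam {ι : Type*} (F : ι → (ℕ → ℝ)) (J : Finset ι) : Prop :=
  ∀ i ∈ J, ∀ j ∈ J, i ≠ j → ∀ k, F i k = 0 ∨ F j k = 0

/-- `(Σ_{i∈J} |g i|^q)^{1/q}`, interpreted as `max_{i∈J} |g i|` when `q = ∞`. -/
def estNorm (q : ℝ≥0∞) {ι : Type*} (J : Finset ι) (g : ι → ℝ) : ℝ :=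
  if q = ⊤ then ((J.sup fun i => Real.toNNReal |g i| : NNReal) : ℝ)
  else (∑ i ∈ J, |g i| ^ q.toReal) ^ (1 / q.toReal)

/-- Upper `s`-estimate for a subsymmetric space (`s` finite). -/
def SubsymmetricSpace.UpperEst (S : SubsymmetricSpace) (s : ℝ) : Prop :=
  ∃ C : ℝ, ∀ (J : Finset ℕ) (F : ℕ → (ℕ → ℝ)), (∀ i ∈ J, S.mem (F i)) → DisjFam F J →
    S.nrm (∑ i ∈ J, F i) ≤ C * (∑ i ∈ J, S.nrm (F i) ^ s) ^ (1 / s)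

/-- Lower `q`-estimate for a subsymmetric space (`q` finite). -/
def SubsymmetricSpace.LowerEst (S : SubsymmetricSpace) (q : ℝ) : Prop :=
  ∃ C : ℝ, ∀ (J : Finset ℕ) (F : ℕ → (ℕ → ℝ)), (∀ i ∈ J, S.mem (F i)) → DisjFam F J →
    (∑ i ∈ J, S.nrm (F i) ^ q) ^ (1 / q) ≤ C * S.nrm (∑ i ∈ J, F i)

/-- Lower `q`-estimate, `q ∈ (0, ∞]`. -/
def SubsymmetricSpace.LowerEstE (S : SubsymmetricSpace) (q : ℝ≥0∞) : Prop :=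
  ∃ C : ℝ, ∀ (J : Finset ℕ) (F : ℕ → (ℕ → ℝ)), (∀ i ∈ J, S.mem (F i)) → DisjFam F J →
    estNorm q J (fun i => S.nrm (F i)) ≤ C * S.nrm (∑ i ∈ J, F i)

/-! ### Squeeze-symmetry -/

/-- The system is squeezed between the symmetric spaces `S₁` and `S₂`: the series
transform is bounded from `S₁` (on finitely supported vectors) and the coefficient
transform is bounded into `S₂`. -/
def BioSystem.SqueezedBetween (b : BioSystem mem nrm) (S₁ S₂ : SymmetricSpace) : Prop :=
  (∃ C : ℝ, ∀ a : ℕ →₀ ℝ, S₁.mem ⇑a →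
    nrm (∑ n ∈ a.support, a n • b.vec n) ≤ C * S₁.nrm ⇑a) ∧
  (∃ C : ℝ, ∀ f, mem f → S₂.mem (fun n => b.coord n f) ∧
    S₂.nrm (fun n => b.coord n f) ≤ C * nrm f)

/-- Squeeze-symmetric system: squeezed between two symmetric spaces with
equivalent fundamental functions. -/
def BioSystem.SqueezeSymmetric (b : BioSystem mem nrm) : Prop :=
  ∃ S₁ S₂ : SymmetricSpace, b.SqueezedBetween S₁ S₂ ∧
    ∃ c C : ℝ, 0 < c ∧ ∀ m : ℕ, 1 ≤ m →
      c * S₂.Lam m ≤ S₁.Lam m ∧ S₁.Lam m ≤ C * S₂.Lam m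

/-! ### Ordered partitions and the Dilworth–Kalton–Kutzarova construction -/

/-- An ordered partition of `ℕ` into (finite, nonempty) integer intervals. -/
structure OrderedPartition where
  part : ℕ → Finset ℕ
  nonempty : ∀ n, (part n).Nonempty
  ordered : ∀ n, ∀ i ∈ part n, ∀ j ∈ part (n + 1), i < j
  covers : ∀ k : ℕ, ∃ n, k ∈ part n

def OrderedPartition.N (σ : OrderedPartition) (n : ℕ) : ℕ := (σ.part n).card

def OrderedPartition.M (σ : OrderedPartition) (r : ℕ) : ℕ := ∑ n ∈ Finset.range r, σ.N n

/-- The averaging projection `P_σ`. -/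
def OrderedPartition.Pavg (σ : OrderedPartition) (f : ℕ → ℝ) : ℕ → ℝ := fun j =>
  if h : ∃ n, j ∈ σ.part n then
    (∑ i ∈ σ.part h.choose, f i) / ((σ.part h.choose).card : ℝ)
  else 0

/-- The complementary projection `Q_σ = Id - P_σ`. -/
def OrderedPartition.Qavg (σ : OrderedPartition) (f : ℕ → ℝ) : ℕ → ℝ := f - σ.Pavg f

/-- The functionals `v_n* = (Λ*_{N_n})⁻¹ Σ_{j∈σ_n} e_j*`. -/
def vstar (S : SubsymmetricSpace) (σ : OrderedPartition) (n : ℕ) (f : ℕ → ℝ) : ℝ :=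
  (S.Lam (σ.N n) / (σ.N n : ℝ)) * ∑ j ∈ σ.part n, f j

/-- The map `H(f) = Σ_n v_n*(f) x_n`. -/
def Hmap {X : Type*} [AddCommGroup X] [Module ℝ X] (B : QuasiBanach X) (b : QBasis B)
    (S : SubsymmetricSpace) (σ : OrderedPartition) (f : ℕ → ℝ) : X :=
  ∑ᶠ n, vstar S σ n f • b.vec n

/-- The quasi-norm `‖f‖ = ‖Q_σ f‖_S + ‖H f‖_X` on finitely supported sequences,
whose completion is the space `𝕐[𝒳,𝕊,σ]`. -/
def YNorm {X : Type*} [AddCommGroup X] [Module ℝ X] (B : QuasiBanach X) (b : QBasis B)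
    (S : SubsymmetricSpace) (σ : OrderedPartition) (f : ℕ → ℝ) : ℝ :=
  S.nrm (σ.Qavg f) + B.q (Hmap B b S σ f)

/-! ### Concrete sequence spaces -/

/-- Membership in `ℓ_p`, `0 < p < ∞`. -/
def lpMem (p : ℝ) (f : ℕ → ℝ) : Prop := Summable fun n => |f n| ^ p

/-- The `ℓ_p` quasi-norm, `0 < p < ∞`. -/
def lpNrm (p : ℝ) (f : ℕ → ℝ) : ℝ := (∑' n, |f n| ^ p) ^ (1 / p)

/-- Membership in `ℓ_p` for extended `p` (where `ℓ_∞` means `c₀`). -/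
def lpMemE (p : ℝ≥0∞) (f : ℕ → ℝ) : Prop :=
  if p = ⊤ then Filter.Tendsto f Filter.atTop (nhds 0) else lpMem p.toReal f

/-- The `ℓ_p` quasi-norm for extended `p`. -/
def lpNrmE (p : ℝ≥0∞) (f : ℕ → ℝ) : ℝ :=
  if p = ⊤ then ⨆ n, |f n| else lpNrm p.toReal f

/-- Membership in the matrix space `Z_{p,q} = ℓ_q(ℓ_p)` (with `ℓ_∞` meaning `c₀`). -/
def ZMem (p q : ℝ≥0∞) (f : ℕ → ℕ → ℝ) : Prop :=
  (∀ n, lpMemE p (f n)) ∧ lpMemE q (fun n => lpNrmE p (f n))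

/-- The quasi-norm of `Z_{p,q} = ℓ_q(ℓ_p)`. -/
def ZNrm (p q : ℝ≥0∞) (f : ℕ → ℕ → ℝ) : ℝ := lpNrmE q (fun n => lpNrmE p (f n))


/-- Coordinate projection `S_A` on a (possibly infinite) set of coordinates. -/
def restrictSet (A : Set ℕ) (f : ℕ → ℝ) : ℕ → ℝ := fun j => if j ∈ A then f j else 0

/-!
The averaging projection satisfies `‖P_σ‖ ≤ 2`: on sequences supported in finitely many blocks it is
the mean of the maps `f ↦ f ∘ ρ_r`, where `ρ_r` rotates every block cyclically by `r`. On the points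
that `ρ_r` does not move to the left it is increasing, and likewise on those it does, so each
`f ↦ f ∘ ρ_r` is a sum of two order preserving relocations, which are contractions by
subsymmetry. Hence `‖Q_σ‖ ≤ 3`. Part (i) is immediate, and part (ii) follows from
`Q_σ S_A f = Q_σ S_A (Q_σ f) + Q_σ S_A (P_σ f)` by applying the upper estimate to the blocks of
`S_A (P_σ f)`, which are constant on `A ∩ σ_n`.
-/

lemma restrictSet_eq_indicator (A : Set ℕ) (f : ℕ → ℝ) : restrictSet A f = A.indicator f := by
  funext j
  simp only [restrictSet, Set.indicator_apply]

lemma spread_apply {φ : ℕ → ℕ} (hφ : φ.Injective) (ε f : ℕ → ℝ) (n : ℕ) :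
    spread φ ε f (φ n) = ε n * f n := by
  have h : ∃ k, φ k = φ n := ⟨n, rfl⟩
  rw [spread, dif_pos h, hφ h.choose_spec]

lemma spread_apply_of_notMem_range {φ : ℕ → ℕ} (ε f : ℕ → ℝ) {j : ℕ} (hj : j ∉ Set.range φ) :
    spread φ ε f j = 0 :=
  dif_neg hj

lemma exists_strictMono_extension {n : ℕ} {φ : Fin n → ℕ} (hφ : StrictMono φ) :
    ∃ a : ℕ → ℕ, StrictMono a ∧ ∀ i : Fin n, a i = φ i := by
  refine ⟨fun k => if h : k < n then φ ⟨k, h⟩ else Finset.univ.sup φ + k, ?_, fun i => by simp⟩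
  intro k l hkl
  by_cases hl : l < n
  · have hk : k < n := hkl.trans hl
    simpa only [hk, hl, dif_pos] using hφ (Fin.mk_lt_mk.2 hkl)
  · by_cases hk : k < n
    · have : φ ⟨k, hk⟩ ≤ Finset.univ.sup φ := Finset.le_sup (f := φ) (Finset.mem_univ _)
      simp only [hk, hl, dif_pos, dif_neg, not_false_eq_true]
      omega
    · simpa only [hk, hl, dif_neg, not_false_eq_true, add_lt_add_iff_left] using hkl

lemma sum_range_of_periodic {M : Type*} [AddCommMonoid M] {G : ℕ → M} {N : ℕ}
    (hG : Function.Periodic G N) (t : ℕ) :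
    ∑ r ∈ Finset.range N, G (t + r) = ∑ r ∈ Finset.range N, G r := by
  calc ∑ r ∈ Finset.range N, G (t + r) = ∑ k ∈ Finset.Ico t (t + N), G k := by
        rw [Finset.sum_Ico_eq_sum_range, Nat.add_sub_cancel_left]
    _ = (((Multiset.Ico t (t + N)).map (· % N)).map G).sum := by
        rw [Multiset.map_map]
        exact Finset.sum_congr rfl fun k _ => (hG.map_mod_nat k).symm
    _ = ∑ r ∈ Finset.range N, G r := by
        rw [Nat.multiset_Ico_map_mod]
        rfl

lemma sum_range_mul_of_periodic {M : Type*} [AddCommMonoid M] {G : ℕ → M} {N : ℕ}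
    (hG : Function.Periodic G N) (t q : ℕ) :
    ∑ r ∈ Finset.range (N * q), G (t + r) = q • ∑ r ∈ Finset.range N, G r := by
  induction q with
  | zero => simp
  | succ q ih =>
    simp only [Nat.mul_succ, Finset.sum_range_add, ih, succ_nsmul, ← add_assoc,
      sum_range_of_periodic hG]

namespace SubsymmetricSpace

variable (S : SubsymmetricSpace)

/-- The carrier of `S` as a linear subspace of the space of all sequences. -/
def toSubmodule : Submodule ℝ (ℕ → ℝ) where
  carrier := {f | S.mem f}
  zero_mem' := S.zero_mem
  add_mem' := S.add_mem
  smul_mem' a _ := S.smul_mem a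

variable {S}

lemma sub_mem {f g : ℕ → ℝ} (hf : S.mem f) (hg : S.mem g) : S.mem (f - g) :=
  S.toSubmodule.sub_mem hf hg

lemma mem_of_finite_support {f : ℕ → ℝ} (hf : f.support.Finite) : S.mem f := by
  have hsum : f = ∑ i ∈ hf.toFinset, f i • unitVec i := by
    funext j
    simp [unitVec]
  rw [hsum]
  exact S.toSubmodule.sum_mem fun i _ => S.smul_mem _ (S.unit_mem i)

lemma mem_indicator_of_finite {A : Set ℕ} (hA : A.Finite) (f : ℕ → ℝ) : S.mem (A.indicator f) :=
  mem_of_finite_support (hA.subset Set.support_indicator_subset)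

lemma nrm_zero : S.nrm 0 = 0 :=
  (S.nrm_eq_zero S.zero_mem).2 rfl

lemma nrm_sub_le {f g : ℕ → ℝ} (hf : S.mem f) (hg : S.mem g) :
    S.nrm (f - g) ≤ S.nrm f + S.nrm g := by
  have hneg : S.nrm (-g) = S.nrm g := by simpa using S.nrm_smul (-1) g
  rw [sub_eq_add_neg, ← hneg]
  exact S.nrm_triangle hf (S.toSubmodule.neg_mem hg)

lemma nrm_pos {f : ℕ → ℝ} (hf : S.mem f) (h0 : f ≠ 0) : 0 < S.nrm f :=
  (S.nrm_nonneg f).lt_of_ne' fun h => h0 ((S.nrm_eq_zero hf).1 h)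

lemma indic_eq_indicator (m : ℕ) : indic m = (Set.Iio m).indicator 1 := by
  funext j
  simp [indic, Set.indicator_apply]

lemma Lam_pos {m : ℕ} (hm : 0 < m) : 0 < S.Lam m := by
  refine nrm_pos ?_ fun h => ?_
  · rw [indic_eq_indicator]
    exact mem_indicator_of_finite (Set.finite_Iio m) 1
  · simpa [indic, hm] using congrFun h 0

/-! ### Bounded maps -/

variable (S) in
/-- `T` maps `S` into itself with norm at most `C`; its values off `S` are irrelevant. -/
def BoundedBy (T : (ℕ → ℝ) → ℕ → ℝ) (C : ℝ) : Prop :=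
  ∀ f, S.mem f → S.mem (T f) ∧ S.nrm (T f) ≤ C * S.nrm f

namespace BoundedBy

variable {T U : (ℕ → ℝ) → ℕ → ℝ} {C D : ℝ}

protected lemma id : S.BoundedBy (fun f => f) 1 :=
  fun f hf => ⟨hf, (one_mul (S.nrm f)).ge⟩

protected lemma add (hT : S.BoundedBy T C) (hU : S.BoundedBy U D) :
    S.BoundedBy (fun f => T f + U f) (C + D) := fun f hf =>
  ⟨S.add_mem (hT f hf).1 (hU f hf).1, (S.nrm_triangle (hT f hf).1 (hU f hf).1).trans <| by
    linarith [(hT f hf).2, (hU f hf).2]⟩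

protected lemma sub (hT : S.BoundedBy T C) (hU : S.BoundedBy U D) :
    S.BoundedBy (fun f => T f - U f) (C + D) := fun f hf =>
  ⟨sub_mem (hT f hf).1 (hU f hf).1, (nrm_sub_le (hT f hf).1 (hU f hf).1).trans <| by
    linarith [(hT f hf).2, (hU f hf).2]⟩

protected lemma smul (a : ℝ) (hT : S.BoundedBy T C) : S.BoundedBy (fun f => a • T f) (|a| * C) :=
  fun f hf => ⟨S.smul_mem a (hT f hf).1, by
    rw [S.nrm_smul, mul_assoc]
    exact mul_le_mul_of_nonneg_left (hT f hf).2 (abs_nonneg a)⟩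

protected lemma sum {ι : Type*} {T : ι → (ℕ → ℝ) → ℕ → ℝ} {C : ι → ℝ} (J : Finset ι)
    (hT : ∀ i, S.BoundedBy (T i) (C i)) :
    S.BoundedBy (fun f => ∑ i ∈ J, T i f) (∑ i ∈ J, C i) := by
  induction J using Finset.induction_on with
  | empty => exact fun f _ => ⟨by simpa using S.zero_mem, by simp [nrm_zero]⟩
  | insert i J hi ih => simpa only [Finset.sum_insert hi] using (hT i).add ih

protected lemma comp (hC : 0 ≤ C) (hT : S.BoundedBy T C) (hU : S.BoundedBy U D) :
    S.BoundedBy (fun f => T (U f)) (C * D) := fun f hf =>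
  ⟨(hT _ (hU f hf).1).1, by
    rw [mul_assoc]
    exact (hT _ (hU f hf).1).2.trans (mul_le_mul_of_nonneg_left (hU f hf).2 hC)⟩

lemma indicator (A : Set ℕ) : S.BoundedBy (fun f => A.indicator f) 1 := by
  intro f hf
  let ε : ℕ → ℝ := fun j => if j ∈ A then 1 else -1
  have hε (j : ℕ) : |ε j| = 1 := by
    by_cases h : j ∈ A <;> simp [ε, h]
  obtain ⟨hmem, hnrm⟩ := S.subsym hf ε hε id strictMono_id
  have hmean : A.indicator f = (1 / 2 : ℝ) • (f + spread id ε f) := by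
    funext j
    have hj : spread id ε f j = ε j * f j := spread_apply Function.injective_id ε f j
    simp only [Pi.smul_apply, Pi.add_apply, hj, smul_eq_mul]
    by_cases h : j ∈ A
    · rw [Set.indicator_of_mem h, show ε j = 1 from if_pos h]
      ring
    · rw [Set.indicator_of_notMem h, show ε j = -1 from if_neg h]
      ring
  dsimp only
  rw [hmean, S.nrm_smul, abs_of_pos (by norm_num)]
  exact ⟨S.smul_mem _ (S.add_mem hf hmem), by linarith [S.nrm_triangle hf hmem]⟩

end BoundedBy

lemma nrm_indicator_le (A : Set ℕ) {f : ℕ → ℝ} (hf : S.mem f) :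
    S.nrm (A.indicator f) ≤ S.nrm f := by
  simpa using (BoundedBy.indicator A f hf).2

/-! ### Limits -/

lemma qtendsto_indicator_Iio {f : ℕ → ℝ} (hf : S.mem f) :
    QTendsto S.nrm (fun n => (Set.Iio n).indicator f) f := by
  convert S.unit_basis f hf using 2
  funext j
  simp only [Set.indicator_apply, Set.mem_Iio]

lemma abs_apply_mul_nrm_unitVec_le {f : ℕ → ℝ} (hf : S.mem f) (j : ℕ) :
    |f j| * S.nrm (unitVec j) ≤ S.nrm f := by
  have hsingle : Set.indicator {j} f = f j • unitVec j := by
    funext i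
    by_cases h : i = j <;> simp [unitVec, h]
  rw [← S.nrm_smul, ← hsingle]
  exact nrm_indicator_le {j} hf

open Filter in
lemma tendsto_apply_of_qtendsto {u : ℕ → ℕ → ℝ} {g : ℕ → ℝ} (hu : ∀ n, S.mem (u n))
    (hg : S.mem g) (hlim : QTendsto S.nrm u g) (j : ℕ) :
    Tendsto (fun n => u n j) atTop (nhds (g j)) := by
  have hpos : 0 < S.nrm (unitVec j) :=
    nrm_pos (S.unit_mem j) fun h => by simpa [unitVec] using congrFun h j
  refine Metric.tendsto_atTop.2 fun ε hε => ?_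
  obtain ⟨n₀, hn₀⟩ := hlim _ (mul_pos hε hpos)
  refine ⟨n₀, fun n hn => lt_of_mul_lt_mul_right ?_ hpos.le⟩
  exact (abs_apply_mul_nrm_unitVec_le (sub_mem (hu n) hg) j).trans_lt (hn₀ n hn)

lemma nrm_le_of_qtendsto {u : ℕ → ℕ → ℝ} {g : ℕ → ℝ} (hu : ∀ n, S.mem (u n)) (hg : S.mem g)
    (hlim : QTendsto S.nrm u g) {B : ℝ} (hB : ∀ n, S.nrm (u n) ≤ B) : S.nrm g ≤ B := by
  refine le_of_forall_pos_le_add fun ε hε => ?_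
  obtain ⟨n, hn⟩ := hlim ε hε
  calc S.nrm g = S.nrm (u n - (u n - g)) := by rw [sub_sub_cancel]
    _ ≤ S.nrm (u n) + S.nrm (u n - g) := nrm_sub_le (hu n) (sub_mem (hu n) hg)
    _ ≤ B + ε := add_le_add (hB n) (hn n le_rfl).le

lemma qCauchy_of_qtendsto {u : ℕ → ℕ → ℝ} {g : ℕ → ℝ} (hu : ∀ n, S.mem (u n)) (hg : S.mem g)
    (hlim : QTendsto S.nrm u g) : QCauchy S.nrm u := by
  intro ε hε
  obtain ⟨n₀, hn₀⟩ := hlim (ε / 2) (half_pos hε)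
  refine ⟨n₀, fun m hm n hn => ?_⟩
  calc S.nrm (u m - u n) = S.nrm ((u m - g) - (u n - g)) := by rw [sub_sub_sub_cancel_right]
    _ ≤ S.nrm (u m - g) + S.nrm (u n - g) := nrm_sub_le (sub_mem (hu m) hg) (sub_mem (hu n) hg)
    _ < ε := by linarith [hn₀ m hm, hn₀ n hn]

open Filter in
lemma BoundedBy.of_finite_support {T : (ℕ → ℝ) → ℕ → ℝ} {C : ℝ} (hC : 0 ≤ C)
    (hadd : ∀ f g, T (f + g) = T f + T g)
    (hlocal : ∀ f j, ∀ᶠ n in atTop, T ((Set.Iio n).indicator f) j = T f j)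
    (hT : ∀ f : ℕ → ℝ, f.support.Finite → S.mem (T f) ∧ S.nrm (T f) ≤ C * S.nrm f) :
    S.BoundedBy T C := by
  intro f hf
  let t (n : ℕ) : ℕ → ℝ := (Set.Iio n).indicator f
  have ht_fin (n : ℕ) : (t n).support.Finite :=
    (Set.finite_Iio n).subset Set.support_indicator_subset
  have ht_mem (n : ℕ) : S.mem (t n) := mem_of_finite_support (ht_fin n)
  have hTt_mem (n : ℕ) : S.mem (T (t n)) := (hT _ (ht_fin n)).1
  have hsub (m n : ℕ) : S.nrm (T (t m) - T (t n)) ≤ C * S.nrm (t m - t n) := by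
    rw [← show T (t m - t n) = T (t m) - T (t n) from map_sub (AddMonoidHom.mk' T hadd) _ _]
    exact (hT _ (((ht_fin m).union (ht_fin n)).subset (Function.support_sub _ _))).2
  have hcauchy : QCauchy S.nrm fun n => T (t n) := by
    intro ε hε
    obtain ⟨n₀, hn₀⟩ := qCauchy_of_qtendsto ht_mem hf (qtendsto_indicator_Iio hf) (ε / (C + 1))
      (by positivity)
    refine ⟨n₀, fun m hm n hn => (hsub m n).trans_lt ?_⟩
    have hlt : S.nrm (t m - t n) * (C + 1) < ε := (lt_div_iff₀ (by positivity)).1 (hn₀ m hm n hn)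
    linarith [S.nrm_nonneg (t m - t n)]
  obtain ⟨g, hg, hlim⟩ := S.complete _ hTt_mem hcauchy
  have hTf : T f = g := by
    funext j
    exact tendsto_nhds_unique (tendsto_const_nhds.congr' <| (hlocal f j).mono fun _ h => h.symm)
      (tendsto_apply_of_qtendsto hTt_mem hg hlim j)
  rw [hTf]
  refine ⟨hg, nrm_le_of_qtendsto hTt_mem hg hlim fun n => (hT _ (ht_fin n)).2.trans ?_⟩
  exact mul_le_mul_of_nonneg_left (nrm_indicator_le _ hf) hC

/-! ### Order preserving relocations -/

lemma nrm_eq_nrm_comp_strictMono {φ : ℕ → ℕ} (hφ : StrictMono φ) {h : ℕ → ℝ}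
    (hmem : S.mem (h ∘ φ)) (hsupp : ∀ j ∉ Set.range φ, h j = 0) : S.nrm h = S.nrm (h ∘ φ) := by
  have hspread : spread φ 1 (h ∘ φ) = h := by
    funext j
    by_cases hj : j ∈ Set.range φ
    · obtain ⟨n, rfl⟩ := hj
      simp [spread_apply hφ.injective]
    · rw [spread_apply_of_notMem_range _ _ hj, hsupp j hj]
  rw [← (S.subsym hmem 1 (by simp) φ hφ).2, hspread]

lemma nrm_eq_nrm_comp_strictMono_fin {n : ℕ} {φ : Fin n → ℕ} (hφ : StrictMono φ) {h : ℕ → ℝ}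
    (hsupp : ∀ j ∉ Set.range φ, h j = 0) :
    S.nrm h = S.nrm fun k => if hk : k < n then h (φ ⟨k, hk⟩) else 0 := by
  obtain ⟨a, ha, hae⟩ := exists_strictMono_extension hφ
  have hcomp : (fun k => if hk : k < n then h (φ ⟨k, hk⟩) else 0) = h ∘ a := by
    funext k
    by_cases hk : k < n
    · simp only [hk, dif_pos, Function.comp_apply, ← hae]
    · have hak : a k ∉ Set.range φ := fun ⟨i, hi⟩ =>
        hk (ha.injective ((hae i).trans hi) ▸ i.2)
      simp only [hk, dif_neg, not_false_eq_true, Function.comp_apply, hsupp _ hak]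
  have hmem : S.mem (h ∘ a) := by
    rw [← hcomp]
    exact mem_of_finite_support <| (Set.finite_Iio n).subset fun k hk =>
      by_contra fun hkn => hk (dif_neg hkn)
  rw [hcomp]
  refine nrm_eq_nrm_comp_strictMono ha hmem fun j hj => hsupp j fun ⟨i, hi⟩ => hj ?_
  exact ⟨i, (hae i).trans hi⟩

lemma nrm_indicator_comp (D : Finset ℕ) {ψ : ℕ → ℕ} (hψ : StrictMonoOn ψ D) (f : ℕ → ℝ) :
    S.nrm ((D : Set ℕ).indicator (f ∘ ψ)) = S.nrm ((ψ '' D).indicator f) := by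
  let e := D.orderEmbOfFin rfl
  have he (i : Fin D.card) : e i ∈ (D : Set ℕ) := D.orderEmbOfFin_mem rfl i
  have hrange : Set.range e = D := D.range_orderEmbOfFin rfl
  have hψe : StrictMono (ψ ∘ e) := fun i j hij => hψ (he i) (he j) (e.strictMono hij)
  rw [nrm_eq_nrm_comp_strictMono_fin e.strictMono fun j hj =>
      Set.indicator_of_notMem (hrange ▸ hj) _,
    nrm_eq_nrm_comp_strictMono_fin hψe fun j hj => Set.indicator_of_notMem
      (by rwa [← hrange, ← Set.range_comp]) _]
  simp only [Set.indicator_of_mem (he _), Function.comp_apply,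
    Set.indicator_of_mem (Set.mem_image_of_mem ψ (he _))]

lemma BoundedBy.indicator_comp {D : Set ℕ} {ψ : ℕ → ℕ} (hψ : StrictMonoOn ψ D) :
    S.BoundedBy (fun f => D.indicator (f ∘ ψ)) 1 := by
  refine .of_finite_support zero_le_one (fun f g => Set.indicator_add _ _ _) (fun f j => ?_) ?_
  · filter_upwards [Filter.eventually_gt_atTop (ψ j)] with n hn
    simp [Set.indicator_apply, hn]
  · intro f hf
    have hfin : (D ∩ ψ ⁻¹' f.support).Finite :=
      (hf.subset (Set.image_subset_iff.2 Set.inter_subset_right)).of_finite_image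
        (hψ.injOn.mono Set.inter_subset_left)
    have hD : D.indicator (f ∘ ψ) = (hfin.toFinset : Set ℕ).indicator (f ∘ ψ) := by
      rw [hfin.coe_toFinset, ← Function.support_comp_eq_preimage, ← Set.indicator_indicator,
        Set.indicator_support]
    rw [hD, nrm_indicator_comp _ (hψ.mono (by simp)), one_mul]
    exact ⟨mem_indicator_of_finite (Finset.finite_toSet _) _,
      nrm_indicator_le _ (mem_of_finite_support hf)⟩

lemma nrm_indicator_one (A : Finset ℕ) :
    S.nrm ((A : Set ℕ).indicator 1) = S.Lam A.card := by
  have hcount : StrictMonoOn (Nat.count (· ∈ A)) A :=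
    fun _ hi _ _ hij => Nat.count_strict_mono hi hij
  have himage : Nat.count (· ∈ A) '' A = Set.Iio A.card := by
    refine Set.eq_of_subset_of_ncard_le ?_ ?_ (Set.finite_Iio _)
    · rintro _ ⟨i, hi, rfl⟩
      simpa using Nat.count_lt_card A.finite_toSet hi
    · rw [hcount.injOn.ncard_image]
      simp
  rw [Lam, indic_eq_indicator, ← himage, ← nrm_indicator_comp A hcount]
  rfl

/-! ### Upper estimates -/

lemma UpperEst.exists_nonneg {s : ℝ} (h : S.UpperEst s) :
    ∃ C : ℝ, 0 ≤ C ∧ ∀ (J : Finset ℕ) (F : ℕ → ℕ → ℝ), (∀ i ∈ J, S.mem (F i)) → DisjFam F J →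
      S.nrm (∑ i ∈ J, F i) ≤ C * (∑ i ∈ J, S.nrm (F i) ^ s) ^ (1 / s) := by
  obtain ⟨C, hC⟩ := h
  refine ⟨|C|, abs_nonneg C, fun J F hmem hdisj => (hC J F hmem hdisj).trans ?_⟩
  have hsum : 0 ≤ ∑ i ∈ J, S.nrm (F i) ^ s :=
    Finset.sum_nonneg fun i _ => Real.rpow_nonneg (S.nrm_nonneg _) _
  exact mul_le_mul_of_nonneg_right (le_abs_self C) (Real.rpow_nonneg hsum _)

lemma disjFam_indicator_preimage (b : ℕ → ℕ) (g : ℕ → ℝ) (J : Finset ℕ) :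
    DisjFam (fun n => (b ⁻¹' {n}).indicator g) J := by
  intro i _ j _ hij k
  by_cases hk : b k = i
  · exact .inr (Set.indicator_of_notMem (by simpa [hk] using hij) g)
  · exact .inl (Set.indicator_of_notMem (by simpa using hk) g)

lemma ofReal_nrm_le_of_indicator_Iio {g : ℕ → ℝ} (hg : S.mem g) {B : ℝ≥0∞}
    (hB : ∀ m, ENNReal.ofReal (S.nrm ((Set.Iio m).indicator g)) ≤ B) :
    ENNReal.ofReal (S.nrm g) ≤ B := by
  by_cases htop : B = ⊤
  · exact htop ▸ le_top
  · rw [ENNReal.ofReal_le_iff_le_toReal htop]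
    exact nrm_le_of_qtendsto (fun m => (BoundedBy.indicator _ g hg).1) hg
      (qtendsto_indicator_Iio hg) fun m => (ENNReal.ofReal_le_iff_le_toReal htop).1 (hB m)

lemma UpperEst.exists_ofReal_nrm_le_tsum {s : ℝ} (hs : 0 < s) (h : S.UpperEst s) :
    ∃ C : ℝ, 0 ≤ C ∧ ∀ (b : ℕ → ℕ) (g : ℕ → ℝ), S.mem g → ENNReal.ofReal (S.nrm g) ≤
      ENNReal.ofReal C *
        (∑' n, ENNReal.ofReal (S.nrm ((b ⁻¹' {n}).indicator g) ^ s)) ^ (1 / s) := by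
  obtain ⟨C, hC0, hC⟩ := h.exists_nonneg
  refine ⟨C, hC0, fun b g hg => ?_⟩
  let F (n : ℕ) : ℕ → ℝ := (b ⁻¹' {n}).indicator g
  have hF_mem (n : ℕ) : S.mem (F n) := (BoundedBy.indicator _ g hg).1
  have hF_nonneg (n : ℕ) : 0 ≤ S.nrm (F n) ^ s := Real.rpow_nonneg (S.nrm_nonneg _) _
  have hsum (m : ℕ) : (Set.Iio m).indicator g =
      (Set.Iio m).indicator (∑ n ∈ (Finset.range m).image b, F n) := by
    refine Set.indicator_congr fun k hk => ?_
    have hbk : b k ∈ (Finset.range m).image b := Finset.mem_image_of_mem b (by simpa using hk)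
    simp [F, Set.indicator_apply, hbk]
  refine ofReal_nrm_le_of_indicator_Iio hg fun m => ?_
  let J := (Finset.range m).image b
  calc ENNReal.ofReal (S.nrm ((Set.Iio m).indicator g))
      ≤ ENNReal.ofReal (C * (∑ n ∈ J, S.nrm (F n) ^ s) ^ (1 / s)) := by
        rw [hsum]
        exact ENNReal.ofReal_le_ofReal <|
          (nrm_indicator_le _ (S.toSubmodule.sum_mem fun n _ => hF_mem n)).trans
            (hC J F (fun n _ => hF_mem n) (disjFam_indicator_preimage b g J))
    _ = ENNReal.ofReal C * (∑ n ∈ J, ENNReal.ofReal (S.nrm (F n) ^ s)) ^ (1 / s) := by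
        rw [ENNReal.ofReal_mul hC0, ← ENNReal.ofReal_rpow_of_nonneg
          (Finset.sum_nonneg fun n _ => hF_nonneg n) (one_div_pos.2 hs).le,
          ENNReal.ofReal_sum_of_nonneg fun n _ => hF_nonneg n]
    _ ≤ _ := by
        gcongr
        exact ENNReal.sum_le_tsum J

end SubsymmetricSpace

/-! ### Blocks and their rotations -/

namespace OrderedPartition

variable (σ : OrderedPartition)

/-- The first point of the `n`-th block. -/
def first (n : ℕ) : ℕ := (σ.part n).min' (σ.nonempty n)

/-- The number of the block containing `k`. -/
def index (k : ℕ) : ℕ := (σ.covers k).choose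

lemma mem_part_index (k : ℕ) : k ∈ σ.part (σ.index k) := (σ.covers k).choose_spec

lemma N_pos (n : ℕ) : 0 < σ.N n := Finset.card_pos.2 (σ.nonempty n)

lemma strictMono_first : StrictMono σ.first :=
  strictMono_nat_of_lt_succ fun n => σ.ordered n _ (Finset.min'_mem _ _) _ (Finset.min'_mem _ _)

lemma part_subset_Ico (n : ℕ) : σ.part n ⊆ Finset.Ico (σ.first n) (σ.first (n + 1)) := fun k hk =>
  Finset.mem_Ico.2 ⟨Finset.min'_le _ _ hk, σ.ordered n k hk _ (Finset.min'_mem _ _)⟩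

lemma eq_of_mem_Ico_first {m n k : ℕ} (hm : k ∈ Finset.Ico (σ.first m) (σ.first (m + 1)))
    (hn : k ∈ Finset.Ico (σ.first n) (σ.first (n + 1))) : m = n := by
  rw [Finset.mem_Ico] at hm hn
  have hmn : m < n + 1 := σ.strictMono_first.lt_iff_lt.1 (hm.1.trans_lt hn.2)
  have hnm : n < m + 1 := σ.strictMono_first.lt_iff_lt.1 (hn.1.trans_lt hm.2)
  omega

lemma part_eq_Ico (n : ℕ) : σ.part n = Finset.Ico (σ.first n) (σ.first (n + 1)) := by
  refine (σ.part_subset_Ico n).antisymm fun k hk => ?_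
  rw [← σ.eq_of_mem_Ico_first (σ.part_subset_Ico _ (σ.mem_part_index k)) hk]
  exact σ.mem_part_index k

lemma first_add_N (n : ℕ) : σ.first n + σ.N n = σ.first (n + 1) := by
  have hle := σ.strictMono_first.monotone n.le_succ
  rw [N, part_eq_Ico, Nat.card_Ico, Nat.add_sub_cancel' hle]

lemma mem_part_iff_index_eq {n k : ℕ} : k ∈ σ.part n ↔ σ.index k = n :=
  ⟨fun hk => σ.eq_of_mem_Ico_first (σ.part_subset_Ico _ (σ.mem_part_index k))
    (σ.part_subset_Ico n hk), fun h => h ▸ σ.mem_part_index k⟩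

lemma coe_part (n : ℕ) : (σ.part n : Set ℕ) = σ.index ⁻¹' {n} :=
  Set.ext fun _ => σ.mem_part_iff_index_eq

lemma first_index_le (k : ℕ) : σ.first (σ.index k) ≤ k :=
  Finset.min'_le _ _ (σ.mem_part_index k)

lemma lt_first_index_succ (k : ℕ) : k < σ.first (σ.index k + 1) :=
  (Finset.mem_Ico.1 (σ.part_subset_Ico _ (σ.mem_part_index k))).2

/-- The cyclic rotation of every block by `r` steps to the right. -/
def rotate (r k : ℕ) : ℕ :=
  σ.first (σ.index k) + (k - σ.first (σ.index k) + r) % σ.N (σ.index k)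

lemma index_rotate (r k : ℕ) : σ.index (σ.rotate r k) = σ.index k := by
  rw [← mem_part_iff_index_eq, part_eq_Ico, Finset.mem_Ico, ← first_add_N, rotate]
  exact ⟨Nat.le_add_right _ _, Nat.add_lt_add_left (Nat.mod_lt _ (σ.N_pos _)) _⟩

lemma rotate_eq_or_rotate_add_N_eq (r k : ℕ) :
    σ.rotate r k = k + r % σ.N (σ.index k) ∨
      σ.rotate r k + σ.N (σ.index k) = k + r % σ.N (σ.index k) := by
  have hle := σ.first_index_le k
  have hlt := σ.lt_first_index_succ k
  have hr := Nat.mod_lt r (σ.N_pos (σ.index k))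
  rw [← first_add_N] at hlt
  rw [rotate, ← Nat.add_mod_mod]
  rcases Nat.lt_or_ge (k - σ.first (σ.index k) + r % σ.N (σ.index k)) (σ.N (σ.index k)) with h | h
  · rw [Nat.mod_eq_of_lt h]
    omega
  · rw [Nat.mod_eq_sub_mod h, Nat.mod_eq_of_lt (by omega)]
    omega

lemma rotate_lt_rotate {r i j : ℕ} (hij : i < j) (h : i ≤ σ.rotate r i ↔ j ≤ σ.rotate r j) :
    σ.rotate r i < σ.rotate r j := by
  by_cases hindex : σ.index i = σ.index j
  · have hi := σ.rotate_eq_or_rotate_add_N_eq r i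
    have hj := σ.rotate_eq_or_rotate_add_N_eq r j
    have hr := Nat.mod_lt r (σ.N_pos (σ.index j))
    rw [hindex] at hi
    omega
  · have hlt : σ.index i < σ.index j := by
      have : σ.first (σ.index i) < σ.first (σ.index j + 1) :=
        (σ.first_index_le i).trans_lt (hij.trans (σ.lt_first_index_succ j))
      have := σ.strictMono_first.lt_iff_lt.1 this
      omega
    calc σ.rotate r i < σ.first (σ.index i + 1) := by
          simpa only [index_rotate] using σ.lt_first_index_succ (σ.rotate r i)
      _ ≤ σ.first (σ.index j) := σ.strictMono_first.monotone hlt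
      _ ≤ σ.rotate r j := Nat.le_add_right _ _

lemma boundedBy_comp_rotate (S : SubsymmetricSpace) (r : ℕ) :
    S.BoundedBy (fun f => f ∘ σ.rotate r) 2 := by
  let D : Set ℕ := {k | k ≤ σ.rotate r k}
  have hD : StrictMonoOn (σ.rotate r) D := fun i hi j hj hij =>
    σ.rotate_lt_rotate hij (iff_of_true hi hj)
  have hDc : StrictMonoOn (σ.rotate r) Dᶜ := fun i hi j hj hij =>
    σ.rotate_lt_rotate hij (iff_of_false hi hj)
  have hsum := (SubsymmetricSpace.BoundedBy.indicator_comp (S := S) hD).add (.indicator_comp hDc)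
  simpa only [Set.indicator_self_add_compl, one_add_one_eq_two] using hsum

lemma sum_rotate (f : ℕ → ℝ) (j q : ℕ) :
    ∑ r ∈ Finset.range (σ.N (σ.index j) * q), f (σ.rotate r j) =
      q * ∑ i ∈ σ.part (σ.index j), f i := by
  have hperiodic : Function.Periodic
      (fun k => f (σ.first (σ.index j) + k % σ.N (σ.index j))) (σ.N (σ.index j)) :=
    fun k => by simp only [Nat.add_mod_right]
  have hpart : ∑ i ∈ σ.part (σ.index j), f i =
      ∑ r ∈ Finset.range (σ.N (σ.index j)), f (σ.first (σ.index j) + r % σ.N (σ.index j)) := by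
    rw [part_eq_Ico, ← first_add_N, Finset.sum_Ico_eq_sum_range, Nat.add_sub_cancel_left]
    exact Finset.sum_congr rfl fun r hr => by rw [Nat.mod_eq_of_lt (Finset.mem_range.1 hr)]
  rw [hpart, ← nsmul_eq_mul]
  exact sum_range_mul_of_periodic hperiodic (j - σ.first (σ.index j)) q

/-! ### The averaging projection -/

lemma Pavg_apply (f : ℕ → ℝ) (j : ℕ) :
    σ.Pavg f j = (∑ i ∈ σ.part (σ.index j), f i) / σ.N (σ.index j) :=
  dif_pos (σ.covers j)

lemma Pavg_add (f g : ℕ → ℝ) : σ.Pavg (f + g) = σ.Pavg f + σ.Pavg g := by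
  funext j
  simp only [Pi.add_apply, Pavg_apply, Finset.sum_add_distrib, add_div]

lemma Qavg_add (f g : ℕ → ℝ) : σ.Qavg (f + g) = σ.Qavg f + σ.Qavg g := by
  rw [Qavg, Pavg_add, add_sub_add_comm]
  rfl

lemma eventually_Pavg_indicator_Iio_apply (f : ℕ → ℝ) (j : ℕ) :
    ∀ᶠ n in Filter.atTop, σ.Pavg ((Set.Iio n).indicator f) j = σ.Pavg f j := by
  filter_upwards [Filter.eventually_ge_atTop (σ.first (σ.index j + 1))] with n hn
  rw [Pavg_apply, Pavg_apply, Finset.sum_congr rfl fun i hi => Set.indicator_of_mem ?_ f]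
  exact (Finset.mem_Ico.1 (σ.part_subset_Ico _ hi)).2.trans_le hn

lemma Pavg_eq_average_rotate {f : ℕ → ℝ} {L : ℕ} (hL : L ≠ 0)
    (hdvd : ∀ i, f i ≠ 0 → σ.N (σ.index i) ∣ L) :
    σ.Pavg f = (L : ℝ)⁻¹ • ∑ r ∈ Finset.range L, f ∘ σ.rotate r := by
  funext j
  simp only [Pavg_apply, Pi.smul_apply, Finset.sum_apply, Function.comp_apply, smul_eq_mul]
  by_cases hj : σ.N (σ.index j) ∣ L
  · obtain ⟨q, rfl⟩ := hj
    have hq : (q : ℝ) ≠ 0 := by exact_mod_cast right_ne_zero_of_mul hL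
    have hN : (σ.N (σ.index j) : ℝ) ≠ 0 := by exact_mod_cast left_ne_zero_of_mul hL
    rw [sum_rotate]
    push_cast
    field_simp
  · have hvanish {i : ℕ} (hi : σ.index i = σ.index j) : f i = 0 :=
      by_contra fun h => hj (hi ▸ hdvd i h)
    rw [Finset.sum_eq_zero fun i hi => hvanish (σ.mem_part_iff_index_eq.1 hi),
      Finset.sum_eq_zero fun r _ => hvanish (σ.index_rotate r j), zero_div, mul_zero]

lemma boundedBy_average_rotate (S : SubsymmetricSpace) {L : ℕ} (hL : L ≠ 0) :
    S.BoundedBy (fun f => (L : ℝ)⁻¹ • ∑ r ∈ Finset.range L, f ∘ σ.rotate r) 2 := by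
  have hL' : (L : ℝ) ≠ 0 := Nat.cast_ne_zero.2 hL
  have hsum := (SubsymmetricSpace.BoundedBy.sum (Finset.range L)
    (σ.boundedBy_comp_rotate S)).smul (L : ℝ)⁻¹
  simpa [inv_mul_cancel_left₀ hL'] using hsum

lemma boundedBy_Pavg (S : SubsymmetricSpace) : S.BoundedBy σ.Pavg 2 := by
  refine .of_finite_support zero_le_two σ.Pavg_add σ.eventually_Pavg_indicator_Iio_apply ?_
  intro f hf
  have hL : ∏ n ∈ hf.toFinset.image σ.index, σ.N n ≠ 0 :=
    Finset.prod_ne_zero_iff.2 fun n _ => (σ.N_pos n).ne'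
  rw [σ.Pavg_eq_average_rotate hL fun i hi => Finset.dvd_prod_of_mem σ.N <|
    Finset.mem_image_of_mem σ.index (hf.mem_toFinset.2 hi)]
  exact σ.boundedBy_average_rotate S hL f (SubsymmetricSpace.mem_of_finite_support hf)

lemma boundedBy_Qavg (S : SubsymmetricSpace) : S.BoundedBy σ.Qavg 3 := by
  rw [show (3 : ℝ) = 1 + 2 by norm_num]
  exact SubsymmetricSpace.BoundedBy.id.sub (σ.boundedBy_Pavg S)

variable {S : SubsymmetricSpace}

lemma nrm_indicator_Pavg_preimage_index (A : Set ℕ) (f : ℕ → ℝ) (n : ℕ) :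
    S.nrm ((σ.index ⁻¹' {n}).indicator (A.indicator (σ.Pavg f))) =
      S.Lam (A ∩ σ.part n).ncard / S.Lam (σ.N n) * |vstar S σ n f| := by
  have hfin : (A ∩ σ.part n).Finite := (σ.part n).finite_toSet.inter_of_right A
  have hconst : (σ.index ⁻¹' {n}).indicator (A.indicator (σ.Pavg f)) =
      ((∑ i ∈ σ.part n, f i) / σ.N n) • (hfin.toFinset : Set ℕ).indicator 1 := by
    rw [hfin.coe_toFinset, Set.indicator_indicator, ← coe_part, Set.inter_comm]
    funext j
    by_cases hj : j ∈ A ∩ σ.part n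
    · simp [hj, Pavg_apply, σ.mem_part_iff_index_eq.1 hj.2]
    · simp [hj]
  have hLam := SubsymmetricSpace.Lam_pos (S := S) (σ.N_pos n)
  rw [hconst, S.nrm_smul, SubsymmetricSpace.nrm_indicator_one, ← Set.ncard_eq_toFinset_card _ hfin,
    vstar, div_mul_eq_mul_div, abs_mul, abs_div, abs_div, abs_of_pos hLam]
  field_simp

lemma nrm_Qavg_indicator_le (A : Set ℕ) {f : ℕ → ℝ} (hf : S.mem f) :
    S.nrm (σ.Qavg (A.indicator f)) ≤
      3 * S.nrm (σ.Qavg f) + 3 * S.nrm (A.indicator (σ.Pavg f)) := by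
  have hbound : S.BoundedBy (fun g => σ.Qavg (A.indicator g)) (3 * 1) :=
    (σ.boundedBy_Qavg S).comp zero_le_three (.indicator A)
  have hQ := (σ.boundedBy_Qavg S f hf).1
  have hP := (SubsymmetricSpace.BoundedBy.indicator A _ (σ.boundedBy_Pavg S f hf).1).1
  calc S.nrm (σ.Qavg (A.indicator f))
      = S.nrm (σ.Qavg (A.indicator (σ.Qavg f)) + σ.Qavg (A.indicator (σ.Pavg f))) := by
        rw [← Qavg_add, ← Set.indicator_add', show σ.Qavg f + σ.Pavg f = f from sub_add_cancel _ _]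
    _ ≤ S.nrm (σ.Qavg (A.indicator (σ.Qavg f))) + S.nrm (σ.Qavg (A.indicator (σ.Pavg f))) :=
        S.nrm_triangle (hbound _ hQ).1 (σ.boundedBy_Qavg S _ hP).1
    _ ≤ _ := by
        refine add_le_add ?_ (σ.boundedBy_Qavg S _ hP).2
        simpa only [mul_one] using (hbound _ hQ).2

lemma nrm_Pavg_indicator_le (A : Set ℕ) {f : ℕ → ℝ} (hf : S.mem f) :
    S.nrm (σ.Pavg (A.indicator f)) ≤ 2 * S.nrm f := by
  simpa only [mul_one] using
    ((σ.boundedBy_Pavg S).comp zero_le_two (.indicator A) f hf).2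

end OrderedPartition

theorem statement15_general (S : SubsymmetricSpace) (σ : OrderedPartition) :
    (∀ f : ℕ → ℝ, S.mem f → ∀ A : Set ℕ, S.nrm (σ.Pavg (restrictSet A f)) ≤ 2 * S.nrm f) ∧
    (∀ s : ℝ, 0 < s → S.UpperEst s → ∃ C : ℝ, 0 ≤ C ∧
      ∀ (A : Set ℕ) (f : ℕ → ℝ), S.mem f →
        ENNReal.ofReal (S.nrm (σ.Qavg (restrictSet A f))) ≤
          ENNReal.ofReal (3 * S.nrm (σ.Qavg f)) +
          ENNReal.ofReal C *
            (∑' n : ℕ, ENNReal.ofReal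
              ((S.Lam ((A ∩ ↑(σ.part n)).ncard) / S.Lam (σ.N n)) ^ s *
                |vstar S σ n f| ^ s)) ^ (1 / s)) := by
  simp only [restrictSet_eq_indicator]
  refine ⟨fun f hf A => σ.nrm_Pavg_indicator_le A hf, fun s hs hupper => ?_⟩
  obtain ⟨C, hC0, hC⟩ := hupper.exists_ofReal_nrm_le_tsum hs
  refine ⟨3 * C, by positivity, fun A f hf => ?_⟩
  have hLam (m n : ℕ) : 0 ≤ S.Lam m / S.Lam n := div_nonneg (S.nrm_nonneg _) (S.nrm_nonneg _)
  have hblocks := hC σ.index _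
    (SubsymmetricSpace.BoundedBy.indicator A _ (σ.boundedBy_Pavg S f hf).1).1
  simp only [σ.nrm_indicator_Pavg_preimage_index, Real.mul_rpow (hLam _ _) (abs_nonneg _)]
    at hblocks
  calc ENNReal.ofReal (S.nrm (σ.Qavg (A.indicator f)))
      ≤ ENNReal.ofReal (3 * S.nrm (σ.Qavg f)) +
          ENNReal.ofReal (3 * S.nrm (A.indicator (σ.Pavg f))) :=
        (ENNReal.ofReal_le_ofReal (σ.nrm_Qavg_indicator_le A hf)).trans ENNReal.ofReal_add_le
    _ ≤ _ := by
        rw [ENNReal.ofReal_mul (p := 3) (q := C) zero_le_three,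
          ENNReal.ofReal_mul (p := 3) (q := S.nrm (A.indicator _)) zero_le_three, mul_assoc]
        gcongr

theorem statement15 (S : SubsymmetricSpace) (σ : OrderedPartition) :
    (∀ g : ℕ → ℝ, S.mem g → ∀ A : Set ℕ,
      S.nrm (σ.Pavg (restrictSet A (σ.Qavg g))) ≤ 4 * S.nrm (σ.Qavg g)) ∧
    (∀ s : ℝ, 1 ≤ s → S.UpperEst s → ∃ C : ℝ, 0 ≤ C ∧
      ∀ (A : Set ℕ) (f : ℕ → ℝ), S.mem f →
        ENNReal.ofReal (S.nrm (σ.Qavg (restrictSet A f))) ≤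
          ENNReal.ofReal (5 * S.nrm (σ.Qavg f)) +
          ENNReal.ofReal C *
            (∑' n : ℕ, ENNReal.ofReal
              ((S.Lam ((A ∩ ↑(σ.part n)).ncard) / S.Lam (σ.N n)) ^ s *
                |vstar S σ n f| ^ s)) ^ (1 / s)) := by
  obtain ⟨hP, hQ⟩ := statement15_general S σ
  refine ⟨fun g hg A => ?_, fun s hs hupper => ?_⟩
  · exact (hP _ (σ.boundedBy_Qavg S g hg).1 A).trans (by linarith [S.nrm_nonneg (σ.Qavg g)])
  · obtain ⟨C, hC0, hC⟩ := hQ s (by linarith) hupper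
    refine ⟨C, hC0, fun A f hf => (hC A f hf).trans ?_⟩
    gcongr
    · exact S.nrm_nonneg _
    · norm_num

end AGpaper
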